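/- For every weighted game v on n ≤ 3 voters that has at least one voter who is not a dummy, the normalized Banzhaf power vector (β_1,…,β_n), where β_i = η_i / Σ_{j=1}^n η_j and η_i = #{S ⊆ N∖{i} : v(S ∪ {i}) = 1 and v(S) = 0}, is feasible for v. -/

import Mathlib

open Finset

/-- A (monotonic) simple game on `n` voters. -/
def IsSimpleGame {n : ℕ} (v : Finset (Fin n) → Bool) : Prop :=
  v ∅ = false ∧ v Finset.univ = true ∧
    ∀ S T : Finset (Fin n), S ⊆ T → v S = true → v T = true

/-- `(q; w)` is a representation of the game `v`. -/
def IsRepresentation {n : ℕ} (v : Finset (Fin n) → Bool) (q : ℝ) (w : Fin n → ℝ) : Prop :=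
  (∀ i, 0 ≤ w i) ∧ 0 < q ∧ ∀ S : Finset (Fin n), (q ≤ ∑ i ∈ S, w i ↔ v S = true)

/-- `v` is a weighted game. -/
def IsWeighted {n : ℕ} (v : Finset (Fin n) → Bool) : Prop :=
  ∃ (q : ℝ) (w : Fin n → ℝ), IsRepresentation v q w


/-- Voter `i` is a dummy of `v`. -/
def IsDummy {n : ℕ} (v : Finset (Fin n) → Bool) (i : Fin n) : Prop :=
  ∀ S : Finset (Fin n), i ∉ S → v (insert i S) = v S

/-- The Banzhaf count of voter `i`: the number of coalitions not containing `i`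
to which `i` is critical. -/
def banzhafCount {n : ℕ} (v : Finset (Fin n) → Bool) (i : Fin n) : ℕ :=
  ((Finset.univ.erase i).powerset.filter
    (fun S => v (insert i S) = true ∧ v S = false)).card

/-- Winning coalitions carry strictly more Banzhaf count than losing ones. -/
def CountSeparates {n : ℕ} (v : Finset (Fin n) → Bool) : Prop :=
  v ∅ = false → v Finset.univ = true → (∀ S T : Finset (Fin n), S ⊆ T → v S = true → v T = true) →
    ∀ S T : Finset (Fin n), v S = true → v T = false →
      ∑ i ∈ T, banzhafCount v i < ∑ i ∈ S, banzhafCount v i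

instance {n : ℕ} (v : Finset (Fin n) → Bool) : Decidable (CountSeparates v) := by
  unfold CountSeparates; infer_instance

/-- The three-voter game with given values on the eight coalitions. -/
def game3 (a b c d e f g h : Bool) (S : Finset (Fin 3)) : Bool :=
  bif decide (0 ∈ S) then
    (bif decide (1 ∈ S) then (bif decide (2 ∈ S) then h else g)
      else (bif decide (2 ∈ S) then f else e))
  else
    (bif decide (1 ∈ S) then (bif decide (2 ∈ S) then d else c)
      else (bif decide (2 ∈ S) then b else a))

lemma eq_game3 (v : Finset (Fin 3) → Bool) :
    v = game3 (v ∅) (v {2}) (v {1}) (v {1, 2}) (v {0}) (v {0, 2}) (v {0, 1}) (v {0, 1, 2}) := by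
  funext S
  fin_cases S <;> rfl

set_option maxRecDepth 100000 in
lemma separates_game3 : ∀ b c d e f g : Bool,
    CountSeparates (game3 false b c d e f g true) := by
  decide +kernel

/-- The two-voter game with given values on the four coalitions. -/
def game2 (a b c d : Bool) (S : Finset (Fin 2)) : Bool :=
  bif decide (0 ∈ S) then (bif decide (1 ∈ S) then d else c)
  else (bif decide (1 ∈ S) then b else a)

lemma eq_game2 (v : Finset (Fin 2) → Bool) :
    v = game2 (v ∅) (v {1}) (v {0}) (v {0, 1}) := by
  funext S
  fin_cases S <;> rfl

lemma separates_game2 : ∀ a b c d : Bool, CountSeparates (game2 a b c d) := by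
  decide +kernel

/-- The one-voter game with given values on the two coalitions. -/
def game1 (a b : Bool) (S : Finset (Fin 1)) : Bool :=
  bif decide (0 ∈ S) then b else a

lemma eq_game1 (v : Finset (Fin 1) → Bool) : v = game1 (v ∅) (v {0}) := by
  funext S
  fin_cases S <;> rfl

lemma separates_game1 : ∀ a b : Bool, CountSeparates (game1 a b) := by
  decide +kernel

lemma separates {n : ℕ} (hn : n ≤ 3) (v : Finset (Fin n) → Bool) : CountSeparates v := by
  rcases Nat.lt_or_ge n 3 with h | h
  · interval_cases n
    · intro h0 h1
      have h1' : v ∅ = true := h1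
      simp [h0] at h1'
    · rw [eq_game1 v]
      exact separates_game1 _ _
    · rw [eq_game2 v]
      exact separates_game2 _ _ _ _
  · obtain rfl : n = 3 := le_antisymm hn h
    intro h0 h1
    have hv := eq_game3 v
    have h1' : v {0, 1, 2} = true := h1
    rw [h0, h1'] at hv
    have := separates_game3 (v {2}) (v {1}) (v {1, 2}) (v {0}) (v {0, 2}) (v {0, 1})
    rw [← hv] at this
    exact this h0 h1

/-- For every weighted game on at most three voters having a non-dummy voter,
the normalized Banzhaf power vector is feasible. -/
theorem banzhaf_feasible_of_card_le_three {n : ℕ} (hn : n ≤ 3)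
    (v : Finset (Fin n) → Bool) (hs : IsSimpleGame v) (hw : IsWeighted v)
    (hnd : ∃ i : Fin n, ¬ IsDummy v i) :
    ∃ q : ℝ, IsRepresentation v q
      (fun i => (banzhafCount v i : ℝ) / ∑ j, (banzhafCount v j : ℝ)) := by
  obtain ⟨h0, h1, hm⟩ := hs
  have key := separates hn v h0 h1 hm
  obtain ⟨W, hW, hmin⟩ := Finset.exists_min_image
    (Finset.univ.filter fun S : Finset (Fin n) => v S = true)
    (fun S => ∑ i ∈ S, banzhafCount v i) ⟨Finset.univ, by simp [h1]⟩
  have hW' : v W = true := by simpa using hW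
  have hWpos : 0 < ∑ i ∈ W, banzhafCount v i := by simpa using key W ∅ hW' h0
  have htot : 0 < ∑ i, banzhafCount v i := by simpa using key Finset.univ ∅ h1 h0
  have htot' : (0 : ℝ) < ∑ j, (banzhafCount v j : ℝ) := by exact_mod_cast htot
  refine ⟨(∑ i ∈ W, (banzhafCount v i : ℝ)) / ∑ j, (banzhafCount v j : ℝ), ?_, ?_, ?_⟩
  · intro i
    positivity
  · exact div_pos (by exact_mod_cast hWpos) htot'
  · intro S
    rw [← Finset.sum_div, div_le_div_iff_of_pos_right htot']
    have hc : (∑ i ∈ W, (banzhafCount v i : ℝ)) ≤ ∑ i ∈ S, (banzhafCount v i : ℝ) ↔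
        ∑ i ∈ W, banzhafCount v i ≤ ∑ i ∈ S, banzhafCount v i := by norm_cast
    rw [hc]
    constructor
    · intro hle
      by_contra hS
      have := key W S hW' (by simpa using hS)
      omega
    · intro hS
      exact hmin S (by simp [hS])
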